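/- arXiv:2509.21581 — 2 statements merged into one kernel-verified Lean document; each statement's English description precedes it below -/
import Mathlib

section
/- Let β be a nonzero real number and let h : ℝ² → ℂ be the function h(ρ) = exp(iπ‖ρ‖²). Then for every ρ' ∈ ℝ², the Gaussian-regularized value of H_β[h](ρ') equals e^{2β}·h(ρ'); that is, the limit as ε → 0⁺ of (i·e^β/sinh β)·exp(−iπ‖ρ'‖²·coth β)·∫_{ℝ²} exp(−πε‖ρ‖²)·exp(−iπ‖ρ‖²·coth β)·exp(2πi(ρ'⋅ρ)/sinh β)·exp(iπ‖ρ‖²) dρ is e^{2β}·exp(iπ‖ρ'‖²). In other words, h is an eigenfunction of the hyperbolic fractional Fourier transformation of the first kind H_β with eigenvalue e^{2β}. -/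
open MeasureTheory Filter
open scoped RealInnerProductSpace

noncomputable section

/-- The Euclidean plane `ℝ²`. -/
abbrev Plane := EuclideanSpace ℝ (Fin 2)

/-- Gaussian-regularized hyperbolic fractional Fourier transformation of the first kind:
the integrand carries the extra factor `exp (-π ε ‖ρ‖²)`. -/
def fracHreg (β ε : ℝ) (f : Plane → ℂ) (ρ' : Plane) : ℂ :=
  Complex.I * Real.exp β / Real.sinh β *
    Complex.exp (-(Complex.I * Real.pi * ‖ρ'‖ ^ 2 * (Real.cosh β / Real.sinh β))) *
    ∫ ρ : Plane,
      Complex.exp (-(Real.pi * ε * ‖ρ‖ ^ 2 : ℝ)) *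
      Complex.exp (-(Complex.I * Real.pi * ‖ρ‖ ^ 2 * (Real.cosh β / Real.sinh β))) *
      Complex.exp (2 * Real.pi * Complex.I * ⟪ρ', ρ⟫ / Real.sinh β) * f ρ

/-!
Write `G τ` for the Gaussian `exp (iπτ‖ρ‖²)`. Since `G σ * G τ = G (σ + τ)`, the regularization
moves `τ` to `τ + iε` in the upper half-plane, where the Gaussian integral is explicit, and the
transform acts on the parameter by a hyperbolic Möbius map:
`H_β (G τ) = e^β / (cosh β - τ sinh β) • G ((τ cosh β - sinh β) / (cosh β - τ sinh β))`.
This formula is continuous up to real `τ` away from `coth β`. At the fixed point `τ = 1` of the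
Möbius map the denominator is `e^(-β)`, which gives the eigenvalue `e^(2β)`.
-/

section ComplexGaussian

open Complex
open scoped Real

variable {V : Type*} [Norm V]

/-- The Gaussian `exp (iπτ‖v‖²)` with complex parameter `τ`: integrable when `τ` lies in the upper
half-plane, and a pure quadratic phase when `τ` is real. The eigenfunction of the theorem is the
case `τ = 1`, and the Gaussian regularization by `ε` is the case `τ = iε`. -/
def complexGaussian (τ : ℂ) (v : V) : ℂ :=
  exp (I * π * τ * ‖v‖ ^ 2)

lemma complexGaussian_add (σ τ : ℂ) (v : V) :
    complexGaussian (σ + τ) v = complexGaussian σ v * complexGaussian τ v := by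
  simp only [complexGaussian, ← exp_add]
  ring_nf

lemma continuous_complexGaussian_left (v : V) : Continuous fun τ : ℂ => complexGaussian τ v := by
  unfold complexGaussian
  fun_prop

lemma integral_complexGaussian_mul_exp_inner {E : Type*} [NormedAddCommGroup E]
    [InnerProductSpace ℝ E] [FiniteDimensional ℝ E] [MeasurableSpace E] [BorelSpace E] {τ : ℂ}
    (hτ : 0 < τ.im) (s : ℂ) (w : E) :
    ∫ v : E, complexGaussian τ v * exp (2 * π * I * s * ⟪w, v⟫) =
      (I / τ) ^ (Module.finrank ℝ E / 2 : ℂ) * complexGaussian (-s ^ 2 / τ) w := by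
  have hτ0 : τ ≠ 0 := by
    rintro rfl
    exact hτ.false
  have hre : 0 < (-(I * π * τ)).re := by
    simpa using mul_pos Real.pi_pos hτ
  have hbase : π / -(I * π * τ) = I / τ := by
    field_simp
    simp
  have hexponent : (2 * π * I * s) ^ 2 * ‖w‖ ^ 2 / (4 * -(I * π * τ)) =
      I * π * (-s ^ 2 / τ) * ‖w‖ ^ 2 := by
    field_simp
    ring
  have hintegral := GaussianFourier.integral_cexp_neg_mul_sq_norm_add hre (2 * π * I * s) w
  simpa only [complexGaussian, neg_neg, exp_add, hbase, hexponent] using hintegral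

lemma fracHreg_complexGaussian_eq_integral (β ε : ℝ) (τ : ℂ) (ρ' : Plane) :
    fracHreg β ε (complexGaussian τ) ρ' =
      I * Real.exp β / Real.sinh β * complexGaussian (-(Real.cosh β / Real.sinh β)) ρ' *
        ∫ ρ : Plane, complexGaussian (τ + ε * I - Real.cosh β / Real.sinh β) ρ *
          exp (2 * π * I * (Real.sinh β : ℂ)⁻¹ * ⟪ρ', ρ⟫) := by
  unfold fracHreg
  congr 2
  · rw [complexGaussian]
    ring_nf
  · ext ρ
    simp only [complexGaussian, ← exp_add]
    congr 1
    push_cast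
    linear_combination (-π * ε * ‖ρ‖ ^ 2 : ℂ) * I_sq

lemma cosh_sub_mul_sinh_ne_zero {β : ℝ} (hβ : β ≠ 0) {τ : ℂ} (hτ : τ.im ≠ 0) :
    (Real.cosh β - τ * Real.sinh β : ℂ) ≠ 0 := by
  intro h
  have him : τ.im * Real.sinh β = 0 := by
    simpa only [sub_im, ofReal_im, im_mul_ofReal, zero_sub, zero_im, neg_eq_zero]
      using congrArg im h
  exact mul_ne_zero hτ (Real.sinh_ne_zero.mpr hβ) him

lemma fracHreg_complexGaussian {β ε : ℝ} (hβ : β ≠ 0) {τ : ℂ} (hτ : 0 < (τ + ε * I).im)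
    (ρ' : Plane) :
    fracHreg β ε (complexGaussian τ) ρ' =
      Real.exp β / (Real.cosh β - (τ + ε * I) * Real.sinh β) *
        complexGaussian (((τ + ε * I) * Real.cosh β - Real.sinh β) /
          (Real.cosh β - (τ + ε * I) * Real.sinh β)) ρ' := by
  rw [fracHreg_complexGaussian_eq_integral]
  generalize τ + ε * I = σ at hτ ⊢
  have hsinh : (Real.sinh β : ℂ) ≠ 0 := ofReal_ne_zero.mpr (Real.sinh_ne_zero.mpr hβ)
  have hden := cosh_sub_mul_sinh_ne_zero hβ hτ.ne'
  have hcosh_sq : (Real.cosh β : ℂ) ^ 2 = Real.sinh β ^ 2 + 1 := by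
    exact_mod_cast Real.cosh_sq β
  have him : 0 < (σ - Real.cosh β / Real.sinh β).im := by
    rwa [← ofReal_div, sub_im, ofReal_im, sub_zero]
  have hparam : σ - Real.cosh β / Real.sinh β =
      -((Real.cosh β - σ * Real.sinh β) / Real.sinh β) := by
    field_simp
    ring
  have hphase : (σ * Real.cosh β - Real.sinh β) / (Real.cosh β - σ * Real.sinh β) =
      -(Real.cosh β / Real.sinh β : ℂ) +
        -(Real.sinh β : ℂ)⁻¹ ^ 2 / (σ - Real.cosh β / Real.sinh β) := by
    rw [hparam]
    field_simp
    linear_combination hcosh_sq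
  have hscalar : (Real.exp β / (Real.cosh β - σ * Real.sinh β) : ℂ) =
      I * Real.exp β / Real.sinh β * (I / (σ - Real.cosh β / Real.sinh β)) := by
    rw [hparam]
    field_simp
    rw [I_sq, neg_neg]
  rw [integral_complexGaussian_mul_exp_inner him, finrank_euclideanSpace_fin, Nat.cast_ofNat,
    div_self two_ne_zero, cpow_one, hphase, complexGaussian_add, hscalar]
  ring

lemma tendsto_fracHreg_complexGaussian {β : ℝ} (hβ : β ≠ 0) {τ : ℂ} (hτ : 0 ≤ τ.im)
    (hden : (Real.cosh β - τ * Real.sinh β : ℂ) ≠ 0) (ρ' : Plane) :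
    Tendsto (fun ε : ℝ => fracHreg β ε (complexGaussian τ) ρ') (nhdsWithin 0 (Set.Ioi 0))
      (nhds (Real.exp β / (Real.cosh β - τ * Real.sinh β) *
        complexGaussian ((τ * Real.cosh β - Real.sinh β) /
          (Real.cosh β - τ * Real.sinh β)) ρ')) := by
  have hclosed : ContinuousAt (fun σ : ℂ =>
      Real.exp β / (Real.cosh β - σ * Real.sinh β) *
        complexGaussian ((σ * Real.cosh β - Real.sinh β) /
          (Real.cosh β - σ * Real.sinh β)) ρ') τ := by
    refine ContinuousAt.mul (by fun_prop (disch := exact hden)) ?_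
    exact (continuous_complexGaussian_left ρ').continuousAt.comp
      (by fun_prop (disch := exact hden))
  have hparam : Tendsto (fun ε : ℝ => τ + ε * I) (nhdsWithin 0 (Set.Ioi 0)) (nhds τ) := by
    have hcont : Continuous fun ε : ℝ => τ + ε * I := by fun_prop
    simpa using (hcont.tendsto 0).mono_left nhdsWithin_le_nhds
  refine (hclosed.tendsto.comp hparam).congr' ?_
  filter_upwards [self_mem_nhdsWithin] with ε hε
  have him : 0 < (τ + ε * I).im := by
    simpa using add_pos_of_nonneg_of_pos hτ hε
  exact (fracHreg_complexGaussian hβ him ρ').symm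

end ComplexGaussian

/-- `h(ρ) = exp(iπ‖ρ‖²)` is an eigenfunction of `H_β` (Gaussian-regularized)
with eigenvalue `e^(2β)`. -/
theorem stmt1 (β : ℝ) (hβ : β ≠ 0)
    (h : Plane → ℂ) (hh : ∀ ρ, h ρ = Complex.exp (Complex.I * Real.pi * ‖ρ‖ ^ 2))
    (ρ' : Plane) :
    Tendsto (fun ε : ℝ => fracHreg β ε h ρ')
      (nhdsWithin 0 (Set.Ioi 0)) (nhds (Real.exp (2 * β) * h ρ')) := by
  have hden : (Real.cosh β - 1 * Real.sinh β : ℂ) = (Real.exp β : ℂ)⁻¹ := by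
    rw [one_mul, ← Complex.ofReal_sub, Real.cosh_sub_sinh, Real.exp_neg, Complex.ofReal_inv]
  have hden_ne : (Real.cosh β - 1 * Real.sinh β : ℂ) ≠ 0 := by
    rw [hden]
    exact inv_ne_zero (Complex.ofReal_ne_zero.mpr (Real.exp_ne_zero β))
  have hfixed : (1 * Real.cosh β - Real.sinh β : ℂ) / (Real.cosh β - 1 * Real.sinh β) = 1 := by
    simpa only [one_mul] using div_self hden_ne
  have heigenvalue : (Real.exp β : ℂ) / (Real.cosh β - 1 * Real.sinh β) = Real.exp (2 * β) := by
    rw [hden, div_inv_eq_mul, ← Complex.ofReal_mul, ← Real.exp_add, two_mul]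
  have hgaussian : h = complexGaussian 1 := by
    ext ρ
    rw [hh, complexGaussian, mul_one]
  have hlim := tendsto_fracHreg_complexGaussian hβ Complex.one_im.ge hden_ne ρ'
  rwa [hfixed, heigenvalue, ← hgaussian] at hlim

end
end

section
/- Let β and β' be nonzero real numbers with β + β' ≠ 0, and let f ∈ 𝓢(ℝ², ℂ). Then for every ρ'' ∈ ℝ², H_{β'}[H_β[f]](ρ'') = H_{β'+β}[f](ρ''), where the outer transformation H_{β'} is applied to the function ρ' ↦ H_β[f](ρ'). That is, the composition law H_{β'} ∘ H_β = H_{β'+β} holds for hyperbolic fractional Fourier transformations of the first kind. -/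
open MeasureTheory Filter
open scoped RealInnerProductSpace

noncomputable section

/-- Hyperbolic fractional-order Fourier transformation of the first kind of order `β`
(for `β ≠ 0`), with `coth β = cosh β / sinh β`. -/
def fracH (β : ℝ) (f : Plane → ℂ) (ρ' : Plane) : ℂ :=
  Complex.I * Real.exp β / Real.sinh β *
    Complex.exp (-(Complex.I * Real.pi * ‖ρ'‖ ^ 2 * (Real.cosh β / Real.sinh β))) *
    ∫ ρ : Plane,
      Complex.exp (-(Complex.I * Real.pi * ‖ρ‖ ^ 2 * (Real.cosh β / Real.sinh β))) *
      Complex.exp (2 * Real.pi * Complex.I * ⟪ρ', ρ⟫ / Real.sinh β) * f ρ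

/-
Up to the factor `I * exp β / sinh β`, the transformation `fracH β` is the linear canonical
transform of the hyperbolic rotation of angle `β`: its kernel is the exponential of the generating
function of that symplectic map. Such a transform is a Fourier transform between multiplications by
chirps, so composing two of them amounts to integrating a Fourier transform `𝓕 h` against a chirp.
Parseval's formula evaluates the pairing of `𝓕 h` with the Gaussians `exp (-b ‖v‖ ^ 2)`, `0 < re b`;
both sides are continuous up to the imaginary axis punctured at `0`, and the boundary values are the
chirps. The resulting kernel is that of the product matrix, and multiplying hyperbolic rotations
adds their angles.
-/

open Complex (I exp)
open scoped FourierTransform MatrixGroups Real SchwartzMap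

theorem abs_pow_mul_cpow_half {r : ℝ} (hr : r ≠ 0) {z : ℂ} (hz : z ≠ 0) (n : ℕ) :
    ((|r| : ℝ) : ℂ) ^ n * z ^ (n / 2 : ℂ) = (r ^ 2 * z) ^ (n / 2 : ℂ) := by
  have hr' : ((|r| : ℝ) : ℂ) ≠ 0 := by simpa using hr
  have hlog : Complex.log (r ^ 2 * z) = 2 * Complex.log (|r| : ℝ) + Complex.log z := by
    rw [← Complex.ofReal_pow, Complex.log_ofReal_mul (by positivity) hz, Real.log_pow,
      ← Real.log_abs, Complex.ofReal_mul, Complex.ofReal_log (abs_nonneg r), Nat.cast_ofNat,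
      Complex.ofReal_ofNat]
  rw [Complex.cpow_def_of_ne_zero hz, Complex.cpow_def_of_ne_zero (by simp [hr, hz]), hlog,
    ← Complex.cpow_natCast, Complex.cpow_def_of_ne_zero hr', ← Complex.exp_add]
  ring_nf

theorem re_ofReal_div_nonneg {r : ℝ} (hr : 0 ≤ r) {z : ℂ} (hz : 0 ≤ z.re) : 0 ≤ (r / z).re := by
  rw [div_eq_mul_inv, Complex.re_ofReal_mul, Complex.inv_re]
  exact mul_nonneg hr (div_nonneg hz (Complex.normSq_nonneg z))

theorem mem_slitPlane_of_re_nonneg {z : ℂ} (hre : 0 ≤ z.re) (hz : z ≠ 0) :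
    z ∈ Complex.slitPlane := by
  refine Complex.mem_slitPlane_iff.2 (hre.lt_or_eq.imp_right fun hre_zero him_zero ↦ hz ?_)
  exact Complex.ext hre_zero.symm him_zero

section OscillatingFactors

variable {α E : Type*} [MeasurableSpace α] {μ : Measure α} [NormedAddCommGroup E] [NormedSpace ℂ E]

theorem integrable_cexp_ofReal_mul_I_smul_iff {φ : α → ℝ} (hφ : AEMeasurable φ μ) {g : α → E} :
    Integrable (fun a ↦ exp (φ a * I) • g a) μ ↔ Integrable g μ := by
  have smul_of {ψ : α → ℝ} (hψ : AEMeasurable ψ μ) {k : α → E} (hk : Integrable k μ) :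
      Integrable (fun a ↦ exp (ψ a * I) • k a) μ :=
    hk.bdd_smul 1 (by fun_prop) (.of_forall fun a ↦ (Complex.norm_exp_ofReal_mul_I _).le)
  refine ⟨fun h ↦ (smul_of hφ.neg h).congr (.of_forall fun a ↦ ?_), smul_of hφ⟩
  simp [smul_smul, ← Complex.exp_add]

theorem continuousOn_integral_cexp_neg_mul_smul {φ : α → ℝ} (hφ : AEMeasurable φ μ)
    (hφ_nonneg : ∀ a, 0 ≤ φ a) {g : α → E} (hg : Integrable g μ) :
    ContinuousOn (fun b : ℂ ↦ ∫ a, exp (-b * φ a) • g a ∂μ) {b | 0 ≤ b.re} := by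
  refine continuousOn_of_dominated (bound := fun a ↦ ‖g a‖) (fun b _ ↦ ?_) (fun b hb ↦ ?_) hg.norm
    (.of_forall fun a ↦ by fun_prop)
  · exact AEStronglyMeasurable.smul (by fun_prop) hg.aestronglyMeasurable
  · refine .of_forall fun a ↦ ?_
    have hre : (-b * φ a).re = -(b.re * φ a) := by simp
    rw [norm_smul, Complex.norm_exp, hre]
    refine mul_le_of_le_one_left (norm_nonneg _) (Real.exp_le_one_iff.2 ?_)
    exact neg_nonpos.2 (mul_nonneg hb (hφ_nonneg a))

end OscillatingFactors

section GaussianPairing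

variable {V E : Type*} [NormedAddCommGroup V] [InnerProductSpace ℝ V] [FiniteDimensional ℝ V]
  [MeasurableSpace V] [BorelSpace V] [NormedAddCommGroup E] [NormedSpace ℂ E]

theorem integral_gaussian_smul_fourier_of_re_pos {b : ℂ} (hb : 0 < b.re) (x : V) {h : V → E}
    (hh : Integrable h) :
    ∫ v, exp (-b * ‖v‖ ^ 2 + 2 * π * I * ⟪x, v⟫) • 𝓕 h v =
      (π / b) ^ (Module.finrank ℝ V / 2 : ℂ) •
        ∫ w, exp (-(π ^ 2 / b) * ‖x - w‖ ^ 2) • h w := by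
  by_cases hE : CompleteSpace E; swap
  · simp [integral, hE]
  have hg := GaussianFourier.integrable_cexp_neg_mul_sq_norm_add hb (2 * π * I) x
  have self_adjoint := VectorFourier.integral_fourierIntegral_smul_eq_flip (L := innerₗ V)
    Real.continuous_fourierChar continuous_inner hg hh
  rw [flip_innerₗ] at self_adjoint
  rw [← integral_smul]
  refine self_adjoint.symm.trans (integral_congr_ae (.of_forall fun w ↦ ?_))
  change 𝓕 (fun v : V ↦ exp _) w • h w = _
  rw [fourier_gaussian_innerProductSpace' hb, mul_smul]
  ring_nf

theorem integral_gaussian_smul_fourier {b : ℂ} (hb : 0 ≤ b.re) (hb0 : b ≠ 0) (x : V) {h : V → E}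
    (hh : Integrable h) (hFh : Integrable (𝓕 h)) :
    ∫ v, exp (-b * ‖v‖ ^ 2 + 2 * π * I * ⟪x, v⟫) • 𝓕 h v =
      (π / b) ^ (Module.finrank ℝ V / 2 : ℂ) •
        ∫ w, exp (-(π ^ 2 / b) * ‖x - w‖ ^ 2) • h w := by
  have left_continuousOn : ContinuousOn
      (fun z : ℂ ↦ ∫ v, exp (-z * ‖v‖ ^ 2 + 2 * π * I * ⟪x, v⟫) • 𝓕 h v) {z | 0 ≤ z.re} := by
    have hg : Integrable fun v ↦ exp ((2 * π * ⟪x, v⟫ : ℝ) * I) • 𝓕 h v :=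
      (integrable_cexp_ofReal_mul_I_smul_iff (by fun_prop)).2 hFh
    refine (continuousOn_integral_cexp_neg_mul_smul (φ := fun v : V ↦ ‖v‖ ^ 2) (by fun_prop)
      (fun v ↦ by positivity) hg).congr fun z _ ↦ ?_
    refine integral_congr_ae (.of_forall fun v ↦ ?_)
    simp only [smul_smul, ← Complex.exp_add]
    push_cast
    ring_nf
  have right_continuousOn : ContinuousOn (fun z : ℂ ↦ (π / z) ^ (Module.finrank ℝ V / 2 : ℂ) •
      ∫ w, exp (-(π ^ 2 / z) * ‖x - w‖ ^ 2) • h w) ({z | 0 ≤ z.re} ∩ {0}ᶜ) := by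
    have div_continuousOn (r : ℂ) : ContinuousOn (fun z : ℂ ↦ r / z) ({z | 0 ≤ z.re} ∩ {0}ᶜ) :=
      continuousOn_const.div continuousOn_id fun z hz ↦ hz.2
    refine ((div_continuousOn π).cpow_const fun z hz ↦ ?_).smul ?_
    · exact mem_slitPlane_of_re_nonneg (re_ofReal_div_nonneg Real.pi_pos.le hz.1)
        (div_ne_zero (by exact_mod_cast Real.pi_ne_zero) hz.2)
    · have integral_comp_div := (continuousOn_integral_cexp_neg_mul_smul
        (φ := fun w : V ↦ ‖x - w‖ ^ 2) (by fun_prop) (fun w ↦ by positivity) hh).comp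
          (div_continuousOn (π ^ 2)) fun z hz ↦ by
            simpa using re_ofReal_div_nonneg (sq_nonneg π) hz.1
      simpa [Function.comp_def] using integral_comp_div
  have eqOn_re_pos := fun (z : ℂ) (hz : z ∈ {z : ℂ | 0 < z.re}) ↦
    integral_gaussian_smul_fourier_of_re_pos (E := E) hz x hh
  refine Set.EqOn.of_subset_closure eqOn_re_pos (left_continuousOn.mono Set.inter_subset_left)
    right_continuousOn ?_ ?_ ⟨hb, hb0⟩
  · rintro z hz
    refine ⟨(le_of_lt hz : 0 ≤ z.re), ?_⟩
    rintro rfl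
    simp at hz
  · rw [Complex.closure_setOfPred_lt_re]
    exact Set.inter_subset_left

end GaussianPairing

section Chirp

variable {V E : Type*} [NormedAddCommGroup V] [NormedAddCommGroup E] [NormedSpace ℂ E]

/-- The chirp `v ↦ exp (-iπc‖v‖²)` of rate `c`, the quadratic phase by which linear canonical
transforms differ from the Fourier transform. The real phase is cast as a whole, so that facts on
`t ↦ exp (it)` apply to it directly. -/
def chirp (c : ℝ) (v : V) : ℂ := exp ((-(π * c * ‖v‖ ^ 2) : ℝ) * I)

theorem chirp_smul [NormedSpace ℝ V] (c r : ℝ) (v : V) :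
    chirp c (r • v) = chirp (c * r ^ 2) v := by
  rw [chirp, chirp, norm_smul, mul_pow, Real.norm_eq_abs, sq_abs]
  ring_nf

theorem integrable_chirp_smul_iff [MeasurableSpace V] [BorelSpace V] {μ : Measure V} (c : ℝ)
    {f : V → E} : Integrable (fun v ↦ chirp c v • f v) μ ↔ Integrable f μ :=
  integrable_cexp_ofReal_mul_I_smul_iff (by fun_prop)

theorem hasTemperateGrowth_cexp_ofReal_mul_I : (fun t : ℝ ↦ exp (t * I)).HasTemperateGrowth := by
  have iteratedDeriv_eq (n : ℕ) :
      iteratedDeriv n (fun t : ℝ ↦ exp (t * I)) = fun t : ℝ ↦ I ^ n * exp (t * I) := by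
    induction n with
    | zero => simp
    | succ n ih =>
      ext t
      have hderiv : HasDerivAt (fun t : ℝ ↦ exp (t * I)) (exp (t * I) * (1 * I)) t :=
        (Complex.ofRealCLM.hasDerivAt.mul_const I).cexp
      rw [iteratedDeriv_succ, ih, (hderiv.const_mul (I ^ n)).deriv]
      ring
  refine ⟨(Complex.ofRealCLM.contDiff.mul contDiff_const).cexp, fun n ↦ ⟨0, 1, fun t ↦ ?_⟩⟩
  simp [norm_iteratedFDeriv_eq_norm_iteratedDeriv, iteratedDeriv_eq, Complex.norm_exp_ofReal_mul_I]

theorem hasTemperateGrowth_chirp [InnerProductSpace ℝ V] (c : ℝ) :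
    (chirp (V := V) c).HasTemperateGrowth :=
  hasTemperateGrowth_cexp_ofReal_mul_I.comp (f := fun v : V ↦ -(π * c * ‖v‖ ^ 2)) (by fun_prop)

theorem integral_chirp_smul_fourier [InnerProductSpace ℝ V] [FiniteDimensional ℝ V]
    [MeasurableSpace V] [BorelSpace V] {c : ℝ} (hc : c ≠ 0) (x : V) {h : V → E}
    (hh : Integrable h) (hFh : Integrable (𝓕 h)) :
    ∫ v, (chirp c v * exp (2 * π * I * ⟪x, v⟫)) • 𝓕 h v =
      (I * c)⁻¹ ^ (Module.finrank ℝ V / 2 : ℂ) • ∫ w, chirp (-c⁻¹) (x - w) • h w := by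
  have hc' : (c : ℂ) ≠ 0 := by exact_mod_cast hc
  have hπ : (π : ℂ) ≠ 0 := by exact_mod_cast Real.pi_ne_zero
  have gaussian_pairing := integral_gaussian_smul_fourier (b := π * I * c) (by simp)
    (mul_ne_zero (mul_ne_zero hπ Complex.I_ne_zero) hc') x hh hFh
  have hconst : π / (π * I * c) = (I * c)⁻¹ := by field_simp
  have hrate : -(π ^ 2 / (π * I * c)) = π * c⁻¹ * I := by
    rw [mul_assoc, sq, mul_div_mul_left _ _ hπ, mul_comm I, ← div_div, Complex.div_I]
    push_cast
    ring
  rw [hconst, hrate] at gaussian_pairing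
  convert! gaussian_pairing using 4 with v
  · rw [chirp, ← Complex.exp_add]
    push_cast
    ring_nf
  · rw [chirp]
    push_cast
    ring_nf

end Chirp

section LinearCanonicalTransform

variable {V E : Type*} [NormedAddCommGroup V] [InnerProductSpace ℝ V] [NormedAddCommGroup E]
  [NormedSpace ℂ E]

/-- The kernel `exp (-2πi S(y, x))` of the linear canonical transform, where
`S(y, x) = (a ‖x‖² - 2 ⟪y, x⟫ + d ‖y‖²) / 2b` is the generating function of the linear symplectic
map with matrix `M = !![a, b; c, d]`; it is meaningful only for `b ≠ 0`. -/
def linearCanonicalKernel (M : SL(2, ℝ)) (y x : V) : ℂ :=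
  exp (-(π * I * (M 0 0 * ‖x‖ ^ 2 - 2 * ⟪y, x⟫ + M 1 1 * ‖y‖ ^ 2) / M 0 1))

theorem linearCanonicalKernel_eq_mul_chirp (M : SL(2, ℝ)) (y x : V) :
    linearCanonicalKernel M y x =
      chirp (M 1 1 / M 0 1) y * exp (2 * π * I * ⟪y, x⟫ / M 0 1) * chirp (M 0 0 / M 0 1) x := by
  simp only [linearCanonicalKernel, chirp, ← Complex.exp_add]
  push_cast
  ring_nf

theorem linearCanonicalKernel_smul_mul_chirp {M M' : SL(2, ℝ)} (hM' : M' 0 1 ≠ 0)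
    (z v : V) :
    linearCanonicalKernel M' z (-M 0 1 • v) * chirp (M 1 1 / M 0 1) (-M 0 1 • v) =
      chirp (M' 1 1 / M' 0 1) z * (chirp (M 0 1 * (M' * M) 0 1 / M' 0 1) v *
        exp (2 * π * I * ⟪-(M 0 1 / M' 0 1) • z, v⟫)) := by
  have hM'_ne : (M' 0 1 : ℂ) ≠ 0 := by exact_mod_cast hM'
  have hmul : (M' * M) 0 1 = M' 0 0 * M 0 1 + M' 0 1 * M 1 1 := by
    simp [Matrix.mul_apply, Fin.sum_univ_two]
  rw [linearCanonicalKernel_eq_mul_chirp, chirp_smul, chirp_smul, real_inner_smul_left,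
    real_inner_smul_right, hmul]
  simp only [chirp, ← Complex.exp_add]
  congr 1
  push_cast
  field_simp
  ring

theorem specialLinearGroup_mul_zero_zero_div {K : Type*} [Field K] {M M' : SL(2, K)}
    (hM : M 0 1 ≠ 0) (hM'M : (M' * M) 0 1 ≠ 0) :
    (M' * M) 0 0 / (M' * M) 0 1 = M 0 0 / M 0 1 - M' 0 1 / (M 0 1 * (M' * M) 0 1) := by
  have hdet : M 0 0 * M 1 1 - M 0 1 * M 1 0 = 1 := by rw [← Matrix.det_fin_two, M.det_coe]
  rw [div_sub_div _ _ hM (mul_ne_zero hM hM'M),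
    div_eq_div_iff hM'M (mul_ne_zero hM (mul_ne_zero hM hM'M))]
  simp only [Matrix.SpecialLinearGroup.coe_mul, Matrix.mul_apply, Fin.sum_univ_two]
  linear_combination -(M 0 1 * M' 0 1 * (M' 0 0 * M 0 1 + M' 0 1 * M 1 1)) * hdet

theorem specialLinearGroup_mul_one_one_div {K : Type*} [Field K] {M M' : SL(2, K)}
    (hM' : M' 0 1 ≠ 0) (hM'M : (M' * M) 0 1 ≠ 0) :
    (M' * M) 1 1 / (M' * M) 0 1 = M' 1 1 / M' 0 1 - M 0 1 / (M' 0 1 * (M' * M) 0 1) := by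
  have hdet : M' 0 0 * M' 1 1 - M' 0 1 * M' 1 0 = 1 := by rw [← Matrix.det_fin_two, M'.det_coe]
  rw [div_sub_div _ _ hM' (mul_ne_zero hM' hM'M),
    div_eq_div_iff hM'M (mul_ne_zero hM' (mul_ne_zero hM' hM'M))]
  simp only [Matrix.SpecialLinearGroup.coe_mul, Matrix.mul_apply, Fin.sum_univ_two]
  linear_combination -(M 0 1 * M' 0 1 * (M' 0 0 * M 0 1 + M' 0 1 * M 1 1)) * hdet

theorem chirp_mul_chirp_sub_mul_chirp {M M' : SL(2, ℝ)} (hM : M 0 1 ≠ 0) (hM' : M' 0 1 ≠ 0)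
    (hM'M : (M' * M) 0 1 ≠ 0) (z w : V) :
    chirp (M' 1 1 / M' 0 1) z * chirp (-(M 0 1 * (M' * M) 0 1 / M' 0 1)⁻¹)
        (-(M 0 1 / M' 0 1) • z - w) * chirp (M 0 0 / M 0 1) w =
      linearCanonicalKernel (M' * M) z w := by
  have hM_ne : (M 0 1 : ℂ) ≠ 0 := by exact_mod_cast hM
  have hM'_ne : (M' 0 1 : ℂ) ≠ 0 := by exact_mod_cast hM'
  have hM'M_ne : ((M' * M) 0 1 : ℂ) ≠ 0 := by exact_mod_cast hM'M
  have hnorm : ‖-(M 0 1 / M' 0 1) • z - w‖ ^ 2 =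
      (M 0 1 / M' 0 1) ^ 2 * ‖z‖ ^ 2 + 2 * (M 0 1 / M' 0 1) * ⟪z, w⟫ + ‖w‖ ^ 2 := by
    rw [norm_sub_sq_real, norm_smul, mul_pow, Real.norm_eq_abs, sq_abs, real_inner_smul_left]
    ring
  rw [linearCanonicalKernel_eq_mul_chirp, specialLinearGroup_mul_zero_zero_div hM hM'M,
    specialLinearGroup_mul_one_one_div hM' hM'M]
  simp only [chirp, hnorm, ← Complex.exp_add]
  generalize (M' * M) 0 1 = b at hM'M_ne ⊢
  congr 1
  push_cast
  field_simp
  ring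

variable [FiniteDimensional ℝ V] [MeasurableSpace V] [BorelSpace V]

/-- The linear canonical transform attached to `M = !![a, b; c, d]`, without the normalising factor
`(ib)^(-n/2)` of the metaplectic representation. -/
def linearCanonicalTransform (M : SL(2, ℝ)) (f : V → E) (y : V) : E :=
  ∫ x, linearCanonicalKernel M y x • f x

theorem linearCanonicalTransform_const_smul (M : SL(2, ℝ)) (k : ℂ) (f : V → E) (y : V) :
    linearCanonicalTransform M (fun x ↦ k • f x) y = k • linearCanonicalTransform M f y := by
  simp only [linearCanonicalTransform, smul_comm _ k, integral_smul]

theorem linearCanonicalTransform_eq_chirp_smul_fourier (M : SL(2, ℝ)) (f : V → E) (y : V) :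
    linearCanonicalTransform M f y =
      chirp (M 1 1 / M 0 1) y • 𝓕 (fun x ↦ chirp (M 0 0 / M 0 1) x • f x) (-(M 0 1)⁻¹ • y) := by
  rw [linearCanonicalTransform, Real.fourier_eq', ← integral_smul]
  refine integral_congr_ae (.of_forall fun x ↦ ?_)
  simp only [linearCanonicalKernel_eq_mul_chirp, smul_smul, ← mul_assoc, inner_smul_right,
    real_inner_comm x]
  push_cast
  ring_nf

theorem integrable_linearCanonicalTransform_iff {M : SL(2, ℝ)} (hM : M 0 1 ≠ 0) {f : V → E} :
    Integrable (linearCanonicalTransform M f) ↔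
      Integrable (𝓕 fun x ↦ chirp (M 0 0 / M 0 1) x • f x) := by
  rw [funext (linearCanonicalTransform_eq_chirp_smul_fourier M f), integrable_chirp_smul_iff,
    integrable_comp_smul_iff volume _ (neg_ne_zero.2 (inv_ne_zero hM))]

theorem integrable_linearCanonicalTransform_schwartz {M : SL(2, ℝ)} (hM : M 0 1 ≠ 0)
    (f : 𝓢(V, E)) : Integrable (linearCanonicalTransform M f) := by
  have chirped_eq : ⇑(SchwartzMap.smulLeftCLM E (chirp (M 0 0 / M 0 1)) f) =
      fun x ↦ chirp (M 0 0 / M 0 1) x • f x :=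
    funext (SchwartzMap.smulLeftCLM_apply_apply (hasTemperateGrowth_chirp _) f)
  rw [integrable_linearCanonicalTransform_iff hM, ← chirped_eq, ← SchwartzMap.fourier_coe]
  exact SchwartzMap.integrable _

theorem linearCanonicalTransform_linearCanonicalTransform {M M' : SL(2, ℝ)} (hM : M 0 1 ≠ 0)
    (hM' : M' 0 1 ≠ 0) (hM'M : (M' * M) 0 1 ≠ 0) {f : V → E} (hf : Integrable f)
    (hMf : Integrable (linearCanonicalTransform M f)) (z : V) :
    linearCanonicalTransform M' (linearCanonicalTransform M f) z =
      ((M 0 1 * M' 0 1 / (I * (M' * M) 0 1) : ℂ) ^ (Module.finrank ℝ V / 2 : ℂ)) •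
        linearCanonicalTransform (M' * M) f z := by
  set c := M 0 1 * (M' * M) 0 1 / M' 0 1 with hc
  set x := -(M 0 1 / M' 0 1) • z with hx
  set h : V → E := fun w ↦ chirp (M 0 0 / M 0 1) w • f w with hh
  set n := Module.finrank ℝ V
  have hc_ne : c ≠ 0 := div_ne_zero (mul_ne_zero hM hM'M) hM'
  have hconst : M 0 1 * M' 0 1 / (I * (M' * M) 0 1) = (M 0 1 : ℂ) ^ 2 * (I * c)⁻¹ := by
    have hM_ne : (M 0 1 : ℂ) ≠ 0 := by exact_mod_cast hM
    rw [hc]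
    push_cast
    field_simp
  calc linearCanonicalTransform M' (linearCanonicalTransform M f) z
    _ = |M 0 1| ^ n • ∫ v, linearCanonicalKernel M' z (-M 0 1 • v) •
          linearCanonicalTransform M f (-M 0 1 • v) := by
      rw [Measure.integral_comp_smul volume
        (fun y ↦ linearCanonicalKernel M' z y • linearCanonicalTransform M f y), smul_smul,
        abs_inv, abs_pow, abs_neg, mul_inv_cancel₀ (by positivity), one_smul,
        linearCanonicalTransform]
    _ = |M 0 1| ^ n • chirp (M' 1 1 / M' 0 1) z •
          ∫ v, (chirp c v * exp (2 * π * I * ⟪x, v⟫)) • 𝓕 h v := by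
      rw [← integral_smul (chirp _ z)]
      congr! 3 with v
      rw [linearCanonicalTransform_eq_chirp_smul_fourier, smul_smul, smul_smul, smul_smul,
        linearCanonicalKernel_smul_mul_chirp hM', neg_mul_neg, inv_mul_cancel₀ hM, one_smul]
    _ = |M 0 1| ^ n • (I * c)⁻¹ ^ (n / 2 : ℂ) • chirp (M' 1 1 / M' 0 1) z •
          ∫ w, chirp (-c⁻¹) (x - w) • h w := by
      rw [integral_chirp_smul_fourier hc_ne x ((integrable_chirp_smul_iff _).2 hf)
        ((integrable_linearCanonicalTransform_iff hM).1 hMf), smul_comm (chirp _ z)]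
    _ = |M 0 1| ^ n • (I * c)⁻¹ ^ (n / 2 : ℂ) • linearCanonicalTransform (M' * M) f z := by
      simp_rw [← integral_smul (chirp _ z), linearCanonicalTransform, hh, smul_smul, hc, hx,
        ← chirp_mul_chirp_sub_mul_chirp hM hM' hM'M, mul_assoc]
    _ = _ := by
      rw [hconst, ← abs_pow_mul_cpow_half hM (by simp [hc_ne]), mul_smul, ← Complex.ofReal_pow,
        Complex.coe_smul]

end LinearCanonicalTransform

/-- The hyperbolic rotation of angle `β`, the symplectic matrix whose linear canonical transform is
`fracH β` up to a constant factor. -/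
def hyperbolicRotation (β : ℝ) : SL(2, ℝ) :=
  ⟨!![Real.cosh β, Real.sinh β; Real.sinh β, Real.cosh β], by
    rw [Matrix.det_fin_two_of, ← sq, ← sq, Real.cosh_sq_sub_sinh_sq]⟩

theorem hyperbolicRotation_mul (β' β : ℝ) :
    hyperbolicRotation β' * hyperbolicRotation β = hyperbolicRotation (β' + β) := by
  ext i j
  rw [Matrix.SpecialLinearGroup.coe_mul, Matrix.mul_apply, Fin.sum_univ_two]
  fin_cases i <;> fin_cases j <;>
    simp [hyperbolicRotation, Real.cosh_add, Real.sinh_add, add_comm]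

theorem hyperbolicRotation_zero_one (β : ℝ) : hyperbolicRotation β 0 1 = Real.sinh β := rfl

theorem hyperbolicRotation_zero_one_ne_zero {β : ℝ} (hβ : β ≠ 0) : hyperbolicRotation β 0 1 ≠ 0 :=
  Real.sinh_ne_zero.2 hβ

theorem fracH_eq_smul_linearCanonicalTransform (β : ℝ) (f : Plane → ℂ) (ρ' : Plane) :
    fracH β f ρ' = (I * Real.exp β / Real.sinh β) •
      linearCanonicalTransform (hyperbolicRotation β) f ρ' := by
  rw [fracH, linearCanonicalTransform, smul_eq_mul, mul_assoc, ← integral_const_mul]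
  congr! 3
  rw [linearCanonicalKernel, smul_eq_mul, ← mul_assoc, ← mul_assoc, ← Complex.exp_add,
    ← Complex.exp_add]
  simp only [hyperbolicRotation, Matrix.SpecialLinearGroup.coe_mk, Matrix.of_apply, Matrix.cons_val]
  ring_nf

theorem integrable_fracH_iff {β : ℝ} (hβ : β ≠ 0) {f : Plane → ℂ} :
    Integrable (fracH β f) ↔
      Integrable (linearCanonicalTransform (hyperbolicRotation β) f) := by
  have hconst : I * Real.exp β / Real.sinh β ≠ 0 :=
    div_ne_zero (mul_ne_zero Complex.I_ne_zero (by exact_mod_cast Real.exp_ne_zero β))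
      (by exact_mod_cast Real.sinh_ne_zero.2 hβ)
  rw [funext (fracH_eq_smul_linearCanonicalTransform β f), integrable_fun_smul_iff hconst]

theorem stmt2_general {β β' : ℝ} (hβ : β ≠ 0) (hβ' : β' ≠ 0) (hsum : β + β' ≠ 0)
    {f : Plane → ℂ} (hf : Integrable f) (hfracH : Integrable (fracH β f)) (ρ'' : Plane) :
    fracH β' (fracH β f) ρ'' = fracH (β' + β) f ρ'' := by
  have h01 := hyperbolicRotation_zero_one_ne_zero hβ
  have h01' := hyperbolicRotation_zero_one_ne_zero hβ'
  have h01_sum := hyperbolicRotation_zero_one_ne_zero ((add_comm β β').symm ▸ hsum)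
  have composition := linearCanonicalTransform_linearCanonicalTransform h01 h01'
    (by rwa [hyperbolicRotation_mul]) hf ((integrable_fracH_iff hβ).1 hfracH) ρ''
  rw [hyperbolicRotation_mul, finrank_euclideanSpace_fin] at composition
  rw [funext (fracH_eq_smul_linearCanonicalTransform β f)]
  simp only [fracH_eq_smul_linearCanonicalTransform, linearCanonicalTransform_const_smul,
    composition, smul_smul]
  congr 1
  have hs : (Real.sinh β : ℂ) ≠ 0 := by exact_mod_cast Real.sinh_ne_zero.2 hβ
  have hs' : (Real.sinh β' : ℂ) ≠ 0 := by exact_mod_cast Real.sinh_ne_zero.2 hβ'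
  simp only [hyperbolicRotation_zero_one, Nat.cast_ofNat, div_self (two_ne_zero' ℂ),
    Complex.cpow_one, Real.exp_add, Complex.ofReal_mul]
  field_simp

/-- Composition law for hyperbolic fractional Fourier transformations of the first kind:
`H_{β'} ∘ H_β = H_{β'+β}` on Schwartz functions. -/
theorem stmt2 (β β' : ℝ) (hβ : β ≠ 0) (hβ' : β' ≠ 0) (hsum : β + β' ≠ 0)
    (f : SchwartzMap Plane ℂ) (ρ'' : Plane) :
    fracH β' (fun ρ' => fracH β (⇑f) ρ') ρ'' = fracH (β' + β) (⇑f) ρ'' := by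
  exact stmt2_general hβ hβ' hsum f.integrable ((integrable_fracH_iff hβ).2
    (integrable_linearCanonicalTransform_schwartz (hyperbolicRotation_zero_one_ne_zero hβ) f)) ρ''

end
end
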